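/- Consider the group G = ℝ/ℤ acting on M = L²(ℝ/ℤ) by time translation (τ·f)(x) = f(x+τ). There exists no congruent section s : M/G → M, i.e., no map s with π∘s = Id satisfying ‖s(o) − s(o')‖ = d_Q(o, o') for all orbits o, o'. -/

import Mathlib

open MeasureTheory

/-- Translation of an `L²` function on the circle `ℝ/ℤ` by `τ`:
`(τ · f)(x) = f(x + τ)`. -/
noncomputable def circleTranslate (τ : AddCircle (1 : ℝ))
    (f : Lp ℝ 2 (volume : Measure (AddCircle (1 : ℝ)))) :
    Lp ℝ 2 (volume : Measure (AddCircle (1 : ℝ))) :=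
  Lp.compMeasurePreserving (fun x => x + τ)
    (measurePreserving_add_right volume τ) f

/-!
If `u` and `v` have orthogonal orbits, then a nonexpansive section moves `u`, `v` and `u + v` by the
same group element: writing `s (u + v) = g u + g v`, the vector `s u - g u` is orthogonal to `g v`,
so `‖s u - s (u + v)‖ ≤ ‖v‖` forces `s u = g u`, and likewise `s v = g v`. Replacing `v` by the
other points of its orbit shows that every group element is a product of an element fixing `u` and
one fixing `v`. If `χ` is a character with `χ²` and `χ³` nontrivial, then `u = Re χ` and `v = Re χ²`
have orthogonal orbits, but both stabilizers lie in the kernel of `χ²`, a proper subgroup.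
-/

open scoped InnerProductSpace

lemma eq_zero_of_inner_eq_zero_of_norm_sub_le {E : Type*} [NormedAddCommGroup E]
    [InnerProductSpace ℝ E] {w b : E} (hinner : ⟪w, b⟫_ℝ = 0) (hnorm : ‖w - b‖ ≤ ‖b‖) : w = 0 := by
  have pythagoras := norm_sub_sq_eq_norm_sq_add_norm_sq_real hinner
  have hsq : ‖w‖ * ‖w‖ = 0 := by nlinarith [norm_nonneg (w - b), norm_nonneg w]
  simpa using hsq

lemma map_mul_isometry_apply {G E : Type*} [Monoid G] [NormedAddCommGroup E] [NormedSpace ℝ E]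
    (ρ : G →* (E →ₗᵢ[ℝ] E)) (g h : G) (u : E) : ρ (g * h) u = ρ g (ρ h u) := by
  rw [map_mul, LinearIsometry.coe_mul, Function.comp_apply]

section NonexpansiveSection

variable {G E : Type*} [NormedAddCommGroup E]

/-- A section of the quotient of `E` by the isometric action `ρ` that does not increase the quotient
distance `d_Q([u], [v]) = inf_g ‖u - g v‖`, encoded as the map sending each `u : E` to the
representative chosen in its orbit; it descends to the quotient by
`IsNonexpansiveSection.apply_action`. -/
structure IsNonexpansiveSection [NormedSpace ℝ E] [Monoid G] (ρ : G →* (E →ₗᵢ[ℝ] E))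
    (s : E → E) : Prop where
  exists_eq_action : ∀ u, ∃ g, s u = ρ g u
  norm_sub_le_iInf : ∀ u v, ‖s u - s v‖ ≤ ⨅ g, ‖u - ρ g v‖

namespace IsNonexpansiveSection

section NormedSpace

variable [NormedSpace ℝ E] [Monoid G] {ρ : G →* (E →ₗᵢ[ℝ] E)} {s : E → E}

lemma norm_sub_le_norm_sub_action (hs : IsNonexpansiveSection ρ s) (g : G) (u v : E) :
    ‖s u - s v‖ ≤ ‖u - ρ g v‖ :=
  (hs.norm_sub_le_iInf u v).trans <|
    ciInf_le ⟨0, Set.forall_mem_range.2 fun _ => norm_nonneg _⟩ g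

lemma norm_sub_le_norm_sub (hs : IsNonexpansiveSection ρ s) (u v : E) : ‖s u - s v‖ ≤ ‖u - v‖ := by
  simpa using hs.norm_sub_le_norm_sub_action 1 u v

lemma apply_action (hs : IsNonexpansiveSection ρ s) (g : G) (u : E) : s (ρ g u) = s u := by
  simpa [sub_eq_zero] using hs.norm_sub_le_norm_sub_action g (ρ g u) u

end NormedSpace

variable [InnerProductSpace ℝ E]

lemma apply_left_of_apply_add [Monoid G] {ρ : G →* (E →ₗᵢ[ℝ] E)} {s : E → E}
    (hs : IsNonexpansiveSection ρ s) {u v : E} (huv : ∀ g h, ⟪ρ g u, ρ h v⟫_ℝ = 0) {g : G}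
    (hg : s (u + v) = ρ g (u + v)) : s u = ρ g u := by
  obtain ⟨h, hh⟩ := hs.exists_eq_action u
  have hinner : ⟪s u - ρ g u, ρ g v⟫_ℝ = 0 := by
    rw [hh, inner_sub_left, huv, huv, sub_zero]
  have hnorm : ‖s u - ρ g u - ρ g v‖ ≤ ‖ρ g v‖ := by
    simpa [hg, sub_sub] using hs.norm_sub_le_norm_sub u (u + v)
  exact sub_eq_zero.1 (eq_zero_of_inner_eq_zero_of_norm_sub_le hinner hnorm)

lemma exists_common_action [Monoid G] {ρ : G →* (E →ₗᵢ[ℝ] E)} {s : E → E}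
    (hs : IsNonexpansiveSection ρ s) {u v : E} (huv : ∀ g h, ⟪ρ g u, ρ h v⟫_ℝ = 0) :
    ∃ g, s u = ρ g u ∧ s v = ρ g v := by
  obtain ⟨g, hg⟩ := hs.exists_eq_action (u + v)
  refine ⟨g, hs.apply_left_of_apply_add huv hg, hs.apply_left_of_apply_add (v := u) ?_ ?_⟩
  · exact fun h k => by rw [real_inner_comm, huv]
  · rw [add_comm v u, hg]

lemma exists_mul_eq_of_orthogonal_orbits [Group G] {ρ : G →* (E →ₗᵢ[ℝ] E)} {s : E → E}
    (hs : IsNonexpansiveSection ρ s) {u v : E} (huv : ∀ g h, ⟪ρ g u, ρ h v⟫_ℝ = 0) (k : G) :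
    ∃ a b, a * b = k ∧ ρ a u = u ∧ ρ b v = v := by
  have ρ_inv_mul {g h : G} {w w' : E} (hw : ρ g w = ρ h w') : ρ (h⁻¹ * g) w = w' := by
    rw [map_mul_isometry_apply, hw, ← map_mul_isometry_apply, inv_mul_cancel, map_one,
      LinearIsometry.coe_one, id]
  have huv' : ∀ g h, ⟪ρ g u, ρ h (ρ k v)⟫_ℝ = 0 := fun g h => by
    rw [← map_mul_isometry_apply, huv]
  obtain ⟨g, hgu, hgv⟩ := hs.exists_common_action huv
  obtain ⟨h, hhu, hhv⟩ := hs.exists_common_action huv'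
  have hv : ρ (h * k) v = ρ g v := by
    rw [map_mul_isometry_apply, ← hhv, hs.apply_action, hgv]
  exact ⟨h⁻¹ * g, g⁻¹ * (h * k), by group, ρ_inv_mul (hgu.symm.trans hhu), ρ_inv_mul hv⟩

end IsNonexpansiveSection

end NonexpansiveSection

section Translation

variable {A : Type*} [AddGroup A] [MeasurableSpace A] [MeasurableAdd A]
  {F : Type*} [NormedAddCommGroup F] [NormedSpace ℝ F] {p : ENNReal} [Fact (1 ≤ p)]

/-- The regular representation of `A` on `Lp F p μ` by translations `(τ · f)(x) = f(x + τ)`. -/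
noncomputable def lpTranslation (μ : Measure A) [μ.IsAddRightInvariant] :
    Multiplicative A →* (Lp F p μ →ₗᵢ[ℝ] Lp F p μ) where
  toFun τ := Lp.compMeasurePreservingₗᵢ ℝ (· + τ.toAdd) (measurePreserving_add_right μ τ.toAdd)
  map_one' := by
    ext1 f
    simpa [Lp.compMeasurePreservingₗᵢ, Lp.compMeasurePreservingₗ, Function.id_def] using
      Lp.compMeasurePreserving_id_apply f
  map_mul' τ σ := by
    ext1 f
    simpa [Lp.compMeasurePreservingₗᵢ, Lp.compMeasurePreservingₗ, Function.comp_def,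
      add_assoc] using
      Lp.compMeasurePreserving_comp_apply f (measurePreserving_add_right μ σ.toAdd)
        (measurePreserving_add_right μ τ.toAdd)

lemma lpTranslation_toLp [TopologicalSpace A] [ContinuousAdd A] [CompactSpace A] [BorelSpace A]
    [SecondCountableTopologyEither A F] (μ : Measure A) [IsFiniteMeasure μ]
    [μ.IsAddRightInvariant] (τ : Multiplicative A) (f : C(A, F)) :
    lpTranslation μ τ (f.toLp p μ ℝ) = (f.comp (.addRight τ.toAdd)).toLp p μ ℝ :=
  rfl

end Translation

section Character

lemma circle_eq_one_of_re_eq_one {z : Circle} (hz : (z : ℂ).re = 1) : z = 1 := by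
  have him : (z : ℂ).im = 0 := Complex.abs_re_eq_norm.1 (by rw [hz, abs_one, Circle.norm_coe])
  exact Circle.ext (Complex.ext hz him)

lemma complex_re_mul_re (z w : ℂ) :
    z.re * w.re = ((z * w).re + (z * starRingEnd ℂ w).re) / 2 := by
  simp only [Complex.mul_re, Complex.conj_re, Complex.conj_im]
  ring

lemma integral_char_eq_zero {A : Type*} [AddGroup A] [MeasurableSpace A] [MeasurableAdd A]
    (μ : Measure A) [μ.IsAddRightInvariant] {χ : AddChar A Circle} (hχ : χ ≠ 1) :
    ∫ x, (χ x : ℂ) ∂μ = 0 := by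
  obtain ⟨τ, hτ⟩ := AddChar.ne_one_iff.1 hχ
  have invariance : (∫ x, (χ x : ℂ) ∂μ) * χ τ = ∫ x, (χ x : ℂ) ∂μ := by
    simpa [AddChar.map_add_eq_mul, integral_mul_const] using
      integral_add_right_eq_self (μ := μ) (fun x => (χ x : ℂ)) τ
  by_contra hne
  exact hτ (Circle.ext (mul_eq_left₀ hne |>.1 invariance))

variable {A : Type*} [AddCommGroup A] [TopologicalSpace A]

/-- The real part of a character: the analogue on `A` of the functions `cos (2πnx)` on `ℝ/ℤ`. -/
noncomputable def reChar (χ : AddChar A Circle) (hχ : Continuous χ) : C(A, ℝ) where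
  toFun x := (χ x : ℂ).re
  continuous_toFun := by fun_prop

variable [CompactSpace A] [MeasurableSpace A]

lemma integrable_char_mul [OpensMeasurableSpace A] (μ : Measure A) [IsFiniteMeasureOnCompacts μ]
    {χ : AddChar A Circle} (hχ : Continuous χ) (c : ℂ) :
    Integrable (fun x => (χ x * c : ℂ)) μ :=
  Continuous.integrable_of_hasCompactSupport (by fun_prop) (.of_compactSpace _)

variable [IsTopologicalAddGroup A] [BorelSpace A] (μ : Measure A) [μ.IsAddHaarMeasure]

lemma integral_re_char_mul_eq_zero {χ : AddChar A Circle} (hcont : Continuous χ) (hχ : χ ≠ 1)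
    (c : ℂ) : ∫ x, (χ x * c : ℂ).re ∂μ = 0 := by
  simpa [integral_mul_const, integral_char_eq_zero μ hχ] using
    integral_re (integrable_char_mul μ hcont c)

lemma inner_lpTranslation_reChar_eq_zero {χ ψ : AddChar A Circle} (hχ : Continuous χ)
    (hψ : Continuous ψ) (hmul : χ * ψ ≠ 1) (hne : χ ≠ ψ) (τ σ : Multiplicative A) :
    ⟪lpTranslation μ τ ((reChar χ hχ).toLp 2 μ ℝ),
      lpTranslation μ σ ((reChar ψ hψ).toLp 2 μ ℝ)⟫_ℝ = 0 := by
  let a : ℂ := χ τ.toAdd * ψ σ.toAdd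
  let b : ℂ := χ τ.toAdd * (ψ σ.toAdd)⁻¹
  have product_to_sum (x : A) : (ψ (x + σ.toAdd) : ℂ).re * (χ (x + τ.toAdd) : ℂ).re =
      (((χ * ψ) x * a : ℂ).re + ((χ * ψ⁻¹) x * b : ℂ).re) / 2 := by
    rw [mul_comm, complex_re_mul_re, ← Circle.coe_inv_eq_conj]
    simp only [a, b, AddChar.map_add_eq_mul, AddChar.mul_apply, AddChar.inv_apply', mul_inv,
      Circle.coe_mul, Circle.coe_inv, mul_mul_mul_comm]
  have hmul_cont : Continuous ⇑(χ * ψ) := hχ.mul hψ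
  have hdiv_cont : Continuous ⇑(χ * ψ⁻¹) := hχ.mul (hψ.comp continuous_neg)
  rw [lpTranslation_toLp, lpTranslation_toLp, ContinuousMap.inner_toLp]
  calc ∫ x, (ψ (x + σ.toAdd) : ℂ).re * (χ (x + τ.toAdd) : ℂ).re ∂μ
      = ((∫ x, ((χ * ψ) x * a : ℂ).re ∂μ) + ∫ x, ((χ * ψ⁻¹) x * b : ℂ).re ∂μ) / 2 := by
        simp_rw [product_to_sum]
        rw [integral_div]
        exact congrArg (· / 2) (integral_add (integrable_char_mul μ hmul_cont a).re
          (integrable_char_mul μ hdiv_cont b).re)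
    _ = 0 := by
        rw [integral_re_char_mul_eq_zero μ hmul_cont hmul,
          integral_re_char_mul_eq_zero μ hdiv_cont (by rwa [← div_eq_mul_inv, Ne, div_eq_one]),
          add_zero, zero_div]

lemma char_eq_one_of_lpTranslation_reChar_eq {χ : AddChar A Circle} (hχ : Continuous χ)
    {τ : Multiplicative A}
    (hτ : lpTranslation μ τ ((reChar χ hχ).toLp 2 μ ℝ) = (reChar χ hχ).toLp 2 μ ℝ) :
    χ τ.toAdd = 1 := by
  have heq : (reChar χ hχ).comp (.addRight τ.toAdd) = reChar χ hχ :=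
    ContinuousMap.toLp_injective (p := 2) (𝕜 := ℝ) μ hτ
  exact circle_eq_one_of_re_eq_one (by simpa [reChar] using DFunLike.congr_fun heq 0)

theorem stmt2_general {χ : AddChar A Circle} (hχ : Continuous χ) (hsq : χ ^ 2 ≠ 1)
    (hcube : χ ^ 3 ≠ 1) :
    ¬ ∃ s : Lp ℝ 2 μ → Lp ℝ 2 μ, IsNonexpansiveSection (lpTranslation μ) s := by
  rintro ⟨s, hs⟩
  have hχsq : Continuous ⇑(χ ^ 2) := hχ.pow 2
  have hne : χ ≠ χ ^ 2 := fun h => hsq (by rw [← h, left_eq_mul.1 (h.trans (pow_two χ))])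
  have horth := inner_lpTranslation_reChar_eq_zero μ hχ hχsq (by rwa [← pow_succ']) hne
  refine hsq (AddChar.eq_one_iff.2 fun x => ?_)
  obtain ⟨a, b, hab, ha, hb⟩ :=
    hs.exists_mul_eq_of_orthogonal_orbits horth (Multiplicative.ofAdd x)
  have hχa : χ a.toAdd = 1 := char_eq_one_of_lpTranslation_reChar_eq μ hχ ha
  have hχb : (χ ^ 2) b.toAdd = 1 := char_eq_one_of_lpTranslation_reChar_eq μ hχsq hb
  calc (χ ^ 2) x = (χ ^ 2) (a.toAdd + b.toAdd) := by rw [← toAdd_mul, hab, toAdd_ofAdd]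
    _ = 1 := by rw [AddChar.map_add_eq_mul, hχb, mul_one, AddChar.pow_apply, hχa, one_pow]

end Character

lemma toCircle_addChar_pow_ne_one {T : ℝ} [Fact (0 < T)] {n : ℕ} (hn : n ≠ 0) :
    (AddCircle.toCircle_addChar : AddChar (AddCircle T) Circle) ^ n ≠ 1 := by
  intro h
  have hpow : AddCircle.toCircle (n • ((T / (n + 1 : ℕ) : ℝ) : AddCircle T)) = 1 := by
    rw [AddCircle.toCircle_nsmul]
    exact DFunLike.congr_fun h _
  have hzero : n • ((T / (n + 1 : ℕ) : ℝ) : AddCircle T) = 0 :=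
    AddCircle.injective_toCircle (Fact.out : 0 < T).ne' (by rw [hpow, AddCircle.toCircle_zero])
  have hdvd := addOrderOf_dvd_of_nsmul_eq_zero hzero
  rw [AddCircle.addOrderOf_period_div n.succ_pos] at hdvd
  exact absurd (Nat.le_of_dvd (Nat.pos_of_ne_zero hn) hdvd) n.lt_succ_self.not_ge

/-- There is no congruent section for the action of `ℝ/ℤ` on `L²(ℝ/ℤ)` by time
translation: no choice of orbit representatives `s` (constant on orbits, with
`s f` in the orbit of `f`) satisfies
`‖s f - s g‖ = d_Q([f],[g]) = inf_τ ‖f - τ·g‖` for all `f, g`. -/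
theorem stmt2 :
    ¬ ∃ s : Lp ℝ 2 (volume : Measure (AddCircle (1 : ℝ))) →
        Lp ℝ 2 (volume : Measure (AddCircle (1 : ℝ))),
      (∀ f, ∃ τ : AddCircle (1 : ℝ), s f = circleTranslate τ f) ∧
      (∀ f g, (∃ τ : AddCircle (1 : ℝ), g = circleTranslate τ f) → s g = s f) ∧
      (∀ f g, ‖s f - s g‖ = ⨅ τ : AddCircle (1 : ℝ), ‖f - circleTranslate τ g‖) := by
  rintro ⟨s, horbit, -, hdist⟩
  exact stmt2_general volume AddCircle.continuous_toCircle (toCircle_addChar_pow_ne_one two_ne_zero)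
    (toCircle_addChar_pow_ne_one three_ne_zero) ⟨s, horbit, fun f g => (hdist f g).le⟩
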